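/- For d even, the orbit of the basis vector e_p under the group G_d generated by {L_q : q ∈ A_d} is exactly the set of primitive vectors v ∈ ℤ^{A_d} whose reduction mod 2 lies in the set E = {ē*} ∪ {ē_q : q ∈ A_d}. -/

import Mathlib

open Matrix

/-- The matrix of the operator `L_p`. -/
def L (d : ℕ) (p : Fin d) : Matrix (Fin d) (Fin d) ℤ :=
  Matrix.of fun r q => if q = p then (if r < p then -1 else 1) else (if r = q then 1 else 0)

/-- The hyperelliptic Rauzy–Veech group `G_d`, generated by the operators `L_p`. -/
def Gd (d : ℕ) : Subgroup (Matrix (Fin d) (Fin d) ℤ)ˣ :=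
  Subgroup.closure {u : (Matrix (Fin d) (Fin d) ℤ)ˣ |
    ∃ p : Fin d, (u : Matrix (Fin d) (Fin d) ℤ) = L d p}

/-- The set `E = {ē*} ∪ {ē_q : q ∈ A_d}` in `(ℤ/2)^{A_d}`. -/
def Eset (d : ℕ) : Set (Fin d → ZMod 2) :=
  insert (fun _ => 1) (Set.range fun q : Fin d => Pi.single q (1 : ZMod 2))

/-!
A vector `v` is encoded by `d + 1` points `x₀, …, x_d` of the line, taken up to translation, with
`v_k = x_{k+1} - x₀` for `k : Fin d`. In this picture `L_0` and the products `L_p L_{p+1} L_p⁻¹` act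
by the braid moves `(…, a, b, …) ↦ (…, 2a - b, a, …)` on adjacent points, so Hurwitz equivalent
configurations give vectors in the same orbit.

As `d + 1 = 2g + 1` is odd, the subtractive Euclidean algorithm on triples of adjacent points brings
any configuration to the form `a₁, a₁, …, a_g, a_g, c`, and a translation makes `c = 0`. A pair
`a, a` passes unchanged through its neighbours, at no cost to them, and can be reflected in them.
Hence the `a_i` may be permuted, negated, and replaced by `a_i ± 2a_j`. Being primitive with
reduction in `E` is an orbit invariant, and for this configuration it says that the `a_i` are odd
and have no common factor. A Euclidean descent then turns all of them into `1`.
-/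

section Gcd

variable {R m n : Type*} [CommSemiring R] [NormalizedGCDMonoid R] [Fintype m] [Fintype n]

theorem gcd_eq_one_iff_isUnit_of_dvd {v : n → R} :
    Finset.univ.gcd v = 1 ↔ ∀ k, (∀ i, k ∣ v i) → IsUnit k := by
  rw [← Finset.normalize_gcd, normalize_eq_one]
  exact ⟨fun h k hk ↦ isUnit_of_dvd_unit (Finset.dvd_gcd fun i _ ↦ hk i) h,
    fun h ↦ h _ fun i ↦ Finset.gcd_dvd (Finset.mem_univ i)⟩

theorem gcd_dvd_gcd_mulVec (A : Matrix m n R) (v : n → R) :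
    Finset.univ.gcd v ∣ Finset.univ.gcd (A *ᵥ v) :=
  Finset.dvd_gcd fun _ _ ↦ Finset.dvd_sum fun _ hj ↦ (Finset.gcd_dvd hj).mul_left _

theorem gcd_mulVec_of_units [DecidableEq n] (B : (Matrix n n R)ˣ) (v : n → R) :
    Finset.univ.gcd ((B : Matrix n n R) *ᵥ v) = Finset.univ.gcd v := by
  refine dvd_antisymm_of_normalize_eq Finset.normalize_gcd Finset.normalize_gcd ?_
    (gcd_dvd_gcd_mulVec _ v)
  simpa [Matrix.mulVec_mulVec] using
    gcd_dvd_gcd_mulVec (↑B⁻¹ : Matrix n n R) ((B : Matrix n n R) *ᵥ v)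

end Gcd

/-! ### The operators `L_p` and their orbits -/

section Operators

variable {d : ℕ}

theorem L_eq_one_add_vecMulVec (p : Fin d) :
    L d p = 1 + vecMulVec (fun r ↦ if r < p then -1 else if r = p then 0 else 1)
      (Pi.single p 1) := by
  ext r q
  simp only [L, Matrix.of_apply, Matrix.add_apply, Matrix.one_apply, vecMulVec_apply,
    Pi.single_apply]
  grind

theorem isUnit_L (p : Fin d) : IsUnit (L d p) := by
  rw [L_eq_one_add_vecMulVec]
  refine IsNilpotent.isUnit_one_add ⟨2, ?_⟩
  simp [pow_two, vecMulVec_mul_vecMulVec]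

theorem L_mulVec_apply (p r : Fin d) (v : Fin d → ℤ) :
    (L d p *ᵥ v) r = if r < p then v r - v p else if r = p then v r else v r + v p := by
  rw [L_eq_one_add_vecMulVec, Matrix.add_mulVec, Matrix.one_mulVec, vecMulVec_mulVec]
  simp only [single_dotProduct, one_mul, op_smul_eq_smul, Pi.add_apply, Pi.smul_apply, smul_eq_mul]
  split_ifs <;> simp [sub_eq_add_neg]

theorem L_mulVec_L_mulVec_of_succ {p q : Fin d} (hpq : (q : ℕ) = p + 1) (u : Fin d → ℤ) :
    L d p *ᵥ L d q *ᵥ u =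
      Function.update (Function.update (L d p *ᵥ u) q ((L d p *ᵥ u) p)) p
        (2 * (L d p *ᵥ u) p - (L d p *ᵥ u) q) := by
  ext r
  simp only [L_mulVec_apply, Function.update_apply]
  grind

theorem intCast_L_mulVec (p r : Fin d) (v : Fin d → ℤ) :
    ((L d p *ᵥ v) r : ZMod 2) = if r = p then (v p : ZMod 2) else v r + v p := by
  rw [L_mulVec_apply]
  split_ifs with hlt heq heq
  · exact absurd heq hlt.ne
  · rw [Int.cast_sub, CharTwo.sub_eq_add]
  · rw [heq]
  · rw [Int.cast_add]

theorem intCast_L_mulVec_mem_Eset (p : Fin d) {v : Fin d → ℤ}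
    (hv : (fun i ↦ (v i : ZMod 2)) ∈ Eset d) :
    (fun i ↦ ((L d p *ᵥ v) i : ZMod 2)) ∈ Eset d := by
  simp only [intCast_L_mulVec]
  rcases hv with hv | ⟨q, hv⟩
  · refine Or.inr ⟨p, funext fun r ↦ ?_⟩
    have hr (i) : (v i : ZMod 2) = 1 := congrFun hv i
    simp [Pi.single_apply, hr, CharTwo.add_self_eq_zero]
  · have hr (i) : (v i : ZMod 2) = if i = q then 1 else 0 := by
      rw [← congrFun hv i]
      exact Pi.single_apply q 1 i
    obtain rfl | hqp := eq_or_ne q p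
    · refine Or.inl (funext fun r ↦ ?_)
      by_cases h : r = q <;> simp [hr, h]
    · refine Or.inr ⟨q, funext fun r ↦ ?_⟩
      by_cases h : r = p <;> simp [Pi.single_apply, hr, h, hqp.symm]

theorem intCast_L_mulVec_mem_Eset_iff (p : Fin d) {v : Fin d → ℤ} :
    (fun i ↦ ((L d p *ᵥ v) i : ZMod 2)) ∈ Eset d ↔ (fun i ↦ (v i : ZMod 2)) ∈ Eset d := by
  refine ⟨fun h ↦ ?_, intCast_L_mulVec_mem_Eset p⟩
  have involutive (r) : ((L d p *ᵥ L d p *ᵥ v) r : ZMod 2) = v r := by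
    by_cases h : r = p <;>
      simp [-Matrix.mulVec_mulVec, intCast_L_mulVec, h, add_assoc, CharTwo.add_self_eq_zero]
  simpa only [involutive] using intCast_L_mulVec_mem_Eset p h

end Operators

section Orbits

variable {d : ℕ} {u v w : Fin d → ℤ}

/-- `w` lies in the `G_d`-orbit of `v`. -/
def SameOrbit (v w : Fin d → ℤ) : Prop :=
  ∃ B ∈ Gd d, (B : Matrix (Fin d) (Fin d) ℤ) *ᵥ v = w

namespace SameOrbit

protected theorem refl (v : Fin d → ℤ) : SameOrbit v v :=
  ⟨1, one_mem _, by simp⟩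

protected theorem symm : SameOrbit v w → SameOrbit w v := by
  rintro ⟨B, hB, rfl⟩
  exact ⟨B⁻¹, inv_mem hB, by simp [Matrix.mulVec_mulVec]⟩

protected theorem trans : SameOrbit u v → SameOrbit v w → SameOrbit u w := by
  rintro ⟨B, hB, rfl⟩ ⟨C, hC, rfl⟩
  exact ⟨C * B, mul_mem hC hB, by simp [Matrix.mulVec_mulVec]⟩

theorem L_mulVec (p : Fin d) (v : Fin d → ℤ) : SameOrbit v (L d p *ᵥ v) :=
  ⟨(isUnit_L p).unit, Subgroup.subset_closure ⟨p, rfl⟩, rfl⟩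

theorem update_update_of_succ {p q : Fin d} (hpq : (q : ℕ) = p + 1) (v : Fin d → ℤ) :
    SameOrbit v (Function.update (Function.update v q (v p)) p (2 * v p - v q)) := by
  obtain ⟨u, rfl⟩ : ∃ u, L d p *ᵥ u = v :=
    Matrix.mulVec_surjective_iff_isUnit.2 (isUnit_L p) v
  rw [← L_mulVec_L_mulVec_of_succ hpq]
  exact (L_mulVec p u).symm.trans ((L_mulVec q u).trans (L_mulVec p _))

theorem gcd_eq (h : SameOrbit v w) : Finset.univ.gcd v = Finset.univ.gcd w := by
  obtain ⟨B, -, rfl⟩ := h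
  exact (gcd_mulVec_of_units B v).symm

theorem mem_Eset_iff (h : SameOrbit v w) :
    (fun i ↦ (v i : ZMod 2)) ∈ Eset d ↔ (fun i ↦ (w i : ZMod 2)) ∈ Eset d := by
  obtain ⟨B, hB, rfl⟩ := h
  induction hB using Subgroup.closure_induction generalizing v with
  | mem B hB =>
    obtain ⟨p, hp⟩ := hB
    rw [hp, intCast_L_mulVec_mem_Eset_iff]
  | one => simp
  | mul B C _ _ ihB ihC => rw [Units.val_mul, ← Matrix.mulVec_mulVec, ihC, ihB]
  | inv B _ ih =>
    rw [ih (v := (↑B⁻¹ : Matrix (Fin d) (Fin d) ℤ) *ᵥ v), Matrix.mulVec_mulVec, Units.mul_inv,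
      Matrix.one_mulVec]

end SameOrbit

end Orbits

/-! ### Hurwitz equivalence -/

section Doubled

variable {A : Type*}

/-- The list `a₁, a₁, …, a_g, a_g, c` attached to `c` and the list of the `a_i`. -/
def doubled (c : A) : List A → List A
  | [] => [c]
  | a :: l => a :: a :: doubled c l

theorem length_doubled (c : A) (l : List A) : (doubled c l).length = 2 * l.length + 1 := by
  induction l with
  | nil => rfl
  | cons a l ih => simp only [doubled, List.length_cons, ih]; ring

theorem map_doubled {B : Type*} (f : A → B) (c : A) (l : List A) :
    (doubled c l).map f = doubled (f c) (l.map f) := by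
  induction l with
  | nil => rfl
  | cons a l ih => simp [doubled, ih]

theorem getD_doubled (c : A) (l : List A) (n : ℕ) :
    (doubled c l).getD n c = l.getD (n / 2) c := by
  induction l generalizing n with
  | nil => cases n <;> simp [doubled]
  | cons a l ih =>
    match n with
    | 0 | 1 => rfl
    | n + 2 => simpa [doubled, show (n + 2) / 2 = n / 2 + 1 by omega] using ih n

end Doubled

section HurwitzEquivalence

variable {A : Type*} [AddCommGroup A]

/-- Hurwitz equivalence of lists in the quandle of point reflections `b ↦ 2a - b`: lists are
equivalent when related by the braid moves `(…, a, b, …) ↦ (…, 2a - b, a, …)` and their inverses. -/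
inductive HurwitzEquiv : List A → List A → Prop
  | refl (l) : HurwitzEquiv l l
  | symm {l m} : HurwitzEquiv l m → HurwitzEquiv m l
  | trans {l m n} : HurwitzEquiv l m → HurwitzEquiv m n → HurwitzEquiv l n
  | swap (a b l) : HurwitzEquiv (a :: b :: l) ((2 • a - b) :: a :: l)
  | cons (a) {l m} : HurwitzEquiv l m → HurwitzEquiv (a :: l) (a :: m)

namespace HurwitzEquiv

theorem length_eq {l m : List A} (h : HurwitzEquiv l m) : l.length = m.length := by
  induction h with
  | refl => rfl
  | symm _ ih => exact ih.symm
  | trans _ _ ih₁ ih₂ => exact ih₁.trans ih₂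
  | swap => rfl
  | cons _ _ ih => exact congrArg (· + 1) ih

theorem append_right {l m : List A} (h : HurwitzEquiv l m) (r : List A) :
    HurwitzEquiv (l ++ r) (m ++ r) := by
  induction h with
  | refl => exact refl _
  | symm _ ih => exact ih.symm
  | trans _ _ ih₁ ih₂ => exact ih₁.trans ih₂
  | swap a b l => exact swap a b _
  | cons a _ ih => exact ih.cons a

theorem swap_inv (a b : A) (l : List A) :
    HurwitzEquiv (a :: b :: l) (b :: (2 • b - a) :: l) := by
  have h := (swap b (2 • b - a) l).symm
  rwa [sub_sub_cancel] at h

theorem pair_cons (a c : A) (l : List A) :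
    HurwitzEquiv (a :: a :: c :: l) (c :: a :: a :: l) := by
  simpa using (cons a (swap a c l)).trans (swap a (2 • a - c) (a :: l))

theorem pair_reflect (a c : A) (l : List A) :
    HurwitzEquiv (a :: a :: c :: l) ((2 • c - a) :: (2 • c - a) :: c :: l) :=
  ((cons a (swap_inv a c l)).trans (swap_inv a c _)).trans (pair_cons _ c l).symm

theorem doubled_perm (c : A) {l m : List A} (h : l.Perm m) :
    HurwitzEquiv (doubled c l) (doubled c m) := by
  induction h with
  | nil => exact refl _
  | cons a _ ih => exact (ih.cons a).cons a
  | swap a b l => exact (pair_cons b a _).trans (cons a (pair_cons b a _))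
  | trans _ _ ih₁ ih₂ => exact ih₁.trans ih₂

theorem doubled_reflect (c a b : A) (l : List A) :
    HurwitzEquiv (doubled c (a :: b :: l)) (doubled c ((2 • b - a) :: b :: l)) :=
  pair_reflect a b _

theorem doubled_concat_reflect_last (c b : A) (l : List A) :
    HurwitzEquiv (doubled c (l ++ [b])) (doubled c (l ++ [2 • c - b])) := by
  induction l with
  | nil => exact pair_reflect b c []
  | cons a l ih => exact (ih.cons a).cons a

theorem doubled_reflect_last (c b : A) (l : List A) :
    HurwitzEquiv (doubled c (b :: l)) (doubled c ((2 • c - b) :: l)) :=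
  ((doubled_perm c (List.perm_append_singleton b l).symm).trans
    (doubled_concat_reflect_last c b l)).trans
    (doubled_perm c (List.perm_append_singleton _ l))

end HurwitzEquiv

end HurwitzEquivalence

section RelativePositions

variable {A : Type*} [AddGroup A] {d : ℕ}

/-- The positions of the entries `x₁, …, x_d` of a list `x₀, …, x_d` relative to `x₀`. It is
meant for lists of length `d + 1`; shorter ones are padded with zeros. -/
def relativePositions (d : ℕ) (l : List A) : Fin d → A :=
  fun k ↦ l.getD (k + 1) 0 - l.getD 0 0

theorem relativePositions_zero_cons_ofFn (v : Fin d → A) :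
    relativePositions d (0 :: List.ofFn v) = v := by
  ext k
  simp [relativePositions]

theorem relativePositions_map_sub {l : List A} (hl : l.length = d + 1) (c : A) :
    relativePositions d (l.map (· - c)) = relativePositions d l := by
  ext k
  have hk : (k : ℕ) + 1 < l.length := by omega
  have h0 : 0 < l.length := by omega
  simp [relativePositions, hk, h0]

end RelativePositions

/-! ### Braid moves on integer points -/

theorem relativePositions_swap_head (d : ℕ) (a b : ℤ) (l : List ℤ) :
    relativePositions (d + 1) ((2 * a - b) :: a :: l) =
      L (d + 1) 0 *ᵥ relativePositions (d + 1) (a :: b :: l) := by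
  ext k
  rw [L_mulVec_apply]
  simp only [relativePositions, Fin.val_zero, List.getD_cons_succ, List.getD_cons_zero]
  cases k using Fin.cases with
  | zero =>
    simp only [Fin.val_zero, List.getD_cons_zero, lt_self_iff_false, if_true, if_false]
    ring
  | succ k =>
    simp only [Fin.val_succ, List.getD_cons_succ, Fin.succ_ne_zero, Fin.not_lt_zero, if_false]
    ring

theorem relativePositions_swap_cons {d : ℕ} (c a b : ℤ) (pre l : List ℤ) {p q : Fin d}
    (hp : (p : ℕ) = pre.length) (hq : (q : ℕ) = pre.length + 1) :
    let v := relativePositions d (c :: pre ++ a :: b :: l)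
    relativePositions d (c :: pre ++ (2 * a - b) :: a :: l) =
      Function.update (Function.update v q (v p)) p (2 * v p - v q) := by
  ext k
  simp only [relativePositions, Function.update_apply, List.getD_eq_getElem?_getD]
  grind

theorem sameOrbit_relativePositions_swap {d : ℕ} (a b : ℤ) (pre l : List ℤ)
    (hl : (pre ++ a :: b :: l).length = d + 1) :
    SameOrbit (relativePositions d (pre ++ a :: b :: l))
      (relativePositions d (pre ++ (2 * a - b) :: a :: l)) := by
  simp only [List.length_append, List.length_cons] at hl
  rcases pre with _ | ⟨c, pre⟩
  · obtain ⟨d, rfl⟩ : ∃ e, d = e + 1 := ⟨l.length, by simpa using hl.symm⟩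
    simpa [relativePositions_swap_head] using SameOrbit.L_mulVec 0 _
  · rw [List.length_cons] at hl
    rw [relativePositions_swap_cons c a b pre l (p := ⟨pre.length, by omega⟩)
      (q := ⟨pre.length + 1, by omega⟩) rfl rfl]
    exact SameOrbit.update_update_of_succ rfl _

theorem HurwitzEquiv.sameOrbit_append {l m : List ℤ} (h : HurwitzEquiv l m) {d : ℕ}
    (pre : List ℤ) (hl : (pre ++ l).length = d + 1) :
    SameOrbit (relativePositions d (pre ++ l)) (relativePositions d (pre ++ m)) := by
  induction h generalizing pre with
  | refl => exact .refl _
  | symm h ih => exact (ih pre (by simpa [h.length_eq] using hl)).symm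
  | trans h _ ih₁ ih₂ => exact (ih₁ pre hl).trans (ih₂ pre (by simpa [h.length_eq] using hl))
  | swap a b l => simpa using sameOrbit_relativePositions_swap a b pre l hl
  | cons a _ ih => simpa using ih (pre ++ [a]) (by simpa using hl)

theorem HurwitzEquiv.sameOrbit {l m : List ℤ} (h : HurwitzEquiv l m) {d : ℕ}
    (hl : l.length = d + 1) :
    SameOrbit (relativePositions d l) (relativePositions d m) :=
  h.sameOrbit_append [] hl

-- Euclid's algorithm by subtraction, on the successive differences `b - a` and `c - b`.
theorem exists_hurwitzEquiv_triple_lt {a b c : ℤ} (hab : a ≠ b) (hbc : b ≠ c) :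
    ∃ a' b' c', HurwitzEquiv [a, b, c] [a', b', c'] ∧
      (b' - a').natAbs + (c' - b').natAbs < (b - a).natAbs + (c - b).natAbs := by
  by_cases h : (b - a).natAbs ≤ (c - b).natAbs
  · by_cases hca : (c - a).natAbs < (c - b).natAbs
    · exact ⟨_, _, _, .swap a b [c], by
        simp only [nsmul_eq_mul, Nat.cast_ofNat]; omega⟩
    · exact ⟨_, _, _, .swap_inv a b [c], by
        simp only [nsmul_eq_mul, Nat.cast_ofNat]; omega⟩
  · by_cases hca : (c - a).natAbs < (b - a).natAbs
    · exact ⟨_, _, _, .cons a (.swap_inv b c []), by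
        simp only [nsmul_eq_mul, Nat.cast_ofNat]; omega⟩
    · exact ⟨_, _, _, .cons a (.swap b c []), by
        simp only [nsmul_eq_mul, Nat.cast_ofNat]; omega⟩

theorem exists_hurwitzEquiv_pair (a b c : ℤ) : ∃ x y, HurwitzEquiv [a, b, c] [x, x, y] := by
  induction hn : (b - a).natAbs + (c - b).natAbs using Nat.strong_induction_on
    generalizing a b c with
  | _ n ih =>
    subst hn
    by_cases hab : a = b
    · exact ⟨a, c, hab ▸ .refl _⟩
    by_cases hbc : b = c
    · exact ⟨b, a, hbc ▸ (HurwitzEquiv.pair_cons b a []).symm⟩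
    obtain ⟨a', b', c', h, hlt⟩ := exists_hurwitzEquiv_triple_lt hab hbc
    obtain ⟨x, y, h'⟩ := ih _ hlt a' b' c' rfl
    exact ⟨x, y, h.trans h'⟩

theorem exists_hurwitzEquiv_doubled {g : ℕ} {l : List ℤ} (hl : l.length = 2 * g + 1) :
    ∃ c as, HurwitzEquiv l (doubled c as) := by
  induction g generalizing l with
  | zero =>
    obtain ⟨c, rfl⟩ := List.length_eq_one_iff.1 hl
    exact ⟨c, [], .refl _⟩
  | succ g ih =>
    match l, hl with
    | a :: b :: c :: l, hl =>
      obtain ⟨x, y, h⟩ := exists_hurwitzEquiv_pair a b c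
      obtain ⟨z, as, h'⟩ := ih (l := y :: l) (by simp only [List.length_cons] at hl ⊢; omega)
      exact ⟨z, x :: as, (h.append_right l).trans ((h'.cons x).cons x)⟩

theorem exists_sameOrbit_doubled_zero {g : ℕ} (v : Fin (2 * g) → ℤ) :
    ∃ as : List ℤ, as.length = g ∧
      SameOrbit v (relativePositions (2 * g) (doubled 0 as)) := by
  have hlen : (0 :: List.ofFn v).length = 2 * g + 1 := by simp
  obtain ⟨c, as, h⟩ := exists_hurwitzEquiv_doubled hlen
  have hlen' : (doubled c as).length = 2 * g + 1 := h.length_eq ▸ hlen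
  refine ⟨as.map (· - c), by rw [length_doubled] at hlen'; simpa using hlen', ?_⟩
  have hv := h.sameOrbit hlen
  rwa [relativePositions_zero_cons_ofFn, ← relativePositions_map_sub hlen' c, map_doubled,
    sub_self] at hv

/-! ### Descent on the pair values -/

/-- The condition on the pair values `a_i` under which the normalised list `a₁, a₁, …, a_g, a_g, 0`
represents a primitive vector with reduction in `Eset`. -/
structure OddPrimitive (l : List ℤ) : Prop where
  odd : ∀ x ∈ l, Odd x
  isUnit_of_dvd : ∀ k : ℤ, (∀ x ∈ l, k ∣ x) → IsUnit k

theorem OddPrimitive.of_perm {l m : List ℤ} (h : OddPrimitive l) (hp : l.Perm m) :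
    OddPrimitive m :=
  ⟨fun x hx ↦ h.odd x (hp.mem_iff.2 hx),
    fun k hk ↦ h.isUnit_of_dvd k fun x hx ↦ hk x (hp.mem_iff.1 hx)⟩

theorem OddPrimitive.two_mul_add {a b : ℤ} {l : List ℤ} (h : OddPrimitive (a :: b :: l))
    (u : ℤˣ) : OddPrimitive ((2 * b + u * a) :: b :: l) where
  odd := by
    have hodd := h.odd
    simp only [List.forall_mem_cons] at hodd ⊢
    have hu : Odd (u : ℤ) := by rcases Int.units_eq_one_or u with rfl | rfl <;> decide
    exact ⟨(even_two_mul b).add_odd (hu.mul hodd.1), hodd.2⟩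
  isUnit_of_dvd k hk := by
    simp only [List.forall_mem_cons] at hk
    refine h.isUnit_of_dvd k ?_
    simp only [List.forall_mem_cons]
    have hua : k ∣ u * a := (dvd_add_right (hk.2.1.mul_left 2)).1 hk.1
    exact ⟨u.isUnit.dvd_mul_left.1 hua, hk.2⟩

theorem HurwitzEquiv.doubled_neg (a : ℤ) (l : List ℤ) :
    HurwitzEquiv (doubled 0 (a :: l)) (doubled 0 (-a :: l)) := by
  simpa using doubled_reflect_last 0 a l

theorem HurwitzEquiv.doubled_two_mul_add (a b : ℤ) (l : List ℤ) (u : ℤˣ) :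
    HurwitzEquiv (doubled 0 (a :: b :: l)) (doubled 0 ((2 * b + u * a) :: b :: l)) := by
  rcases Int.units_eq_one_or u with rfl | rfl
  · simpa using (doubled_neg a (b :: l)).trans (doubled_reflect 0 (-a) b l)
  · simpa [sub_eq_add_neg] using doubled_reflect 0 a b l

theorem HurwitzEquiv.doubled_replicate_one {l : List ℤ} (h : ∀ x ∈ l, IsUnit x) :
    HurwitzEquiv (doubled 0 l) (doubled 0 (List.replicate l.length 1)) := by
  induction l with
  | nil => exact .refl _
  | cons a l ih =>
    rw [List.forall_mem_cons] at h
    have ha : HurwitzEquiv (doubled 0 (a :: l)) (doubled 0 (1 :: l)) := by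
      rcases Int.isUnit_iff.1 h.1 with rfl | rfl
      · exact .refl _
      · simpa using doubled_neg (-1) l
    exact ha.trans (((ih h.2).cons 1).cons 1)

theorem exists_units_natAbs_two_mul_add_lt {a b : ℤ} (hb : b ≠ 0) (h : b.natAbs < a.natAbs) :
    ∃ u : ℤˣ, (2 * b + u * a).natAbs < a.natAbs := by
  by_cases hab : (2 * b + a).natAbs < a.natAbs
  · exact ⟨1, by simpa using hab⟩
  · exact ⟨-1, by simp only [Units.val_neg, Units.val_one]; omega⟩

theorem OddPrimitive.exists_sum_natAbs_lt {l : List ℤ} (h : OddPrimitive l) {a b : ℤ}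
    (ha : a ∈ l) (hb : b ∈ l) (hlt : b.natAbs < a.natAbs) :
    ∃ m, HurwitzEquiv (doubled 0 l) (doubled 0 m) ∧ OddPrimitive m ∧
      m.length = l.length ∧ (m.map Int.natAbs).sum < (l.map Int.natAbs).sum := by
  have hba : b ≠ a := fun hba ↦ hlt.ne (congrArg _ hba)
  obtain ⟨r, hr⟩ : ∃ r, l.Perm (a :: b :: r) :=
    ⟨_, (List.perm_cons_erase ha).trans
      ((List.perm_cons_erase ((List.mem_erase_of_ne hba).2 hb)).cons a)⟩
  have hb0 : b ≠ 0 := fun hb0 ↦ by simpa [hb0] using h.odd b hb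
  obtain ⟨u, hu⟩ := exists_units_natAbs_two_mul_add_lt hb0 hlt
  refine ⟨_, (HurwitzEquiv.doubled_perm 0 hr).trans (.doubled_two_mul_add a b r u),
    (h.of_perm hr).two_mul_add u, by simp [hr.length_eq], ?_⟩
  rw [(hr.map Int.natAbs).sum_eq]
  simpa using hu

theorem OddPrimitive.isUnit_of_natAbs_le {l : List ℤ} (h : OddPrimitive l)
    (hle : ∀ a ∈ l, ∀ b ∈ l, a.natAbs ≤ b.natAbs) : ∀ x ∈ l, IsUnit x := by
  refine fun x hx ↦ h.isUnit_of_dvd x fun y hy ↦ ?_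
  rw [← Int.natAbs_dvd_natAbs, le_antisymm (hle x hx y hy) (hle y hy x hx)]

theorem OddPrimitive.hurwitzEquiv_doubled {l : List ℤ} (h : OddPrimitive l) :
    HurwitzEquiv (doubled 0 l) (doubled 0 (List.replicate l.length 1)) := by
  induction hn : (l.map Int.natAbs).sum using Nat.strong_induction_on generalizing l with
  | _ n ih =>
    subst hn
    by_cases hle : ∀ a ∈ l, ∀ b ∈ l, a.natAbs ≤ b.natAbs
    · exact .doubled_replicate_one (h.isUnit_of_natAbs_le hle)
    · push Not at hle
      obtain ⟨a, ha, b, hb, hlt⟩ := hle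
      obtain ⟨m, hlm, hm, hlen, hsum⟩ := h.exists_sum_natAbs_lt ha hb hlt
      exact hlen ▸ hlm.trans (ih _ hsum hm rfl)

/-! ### Invariants of paired configurations -/

theorem eq_zero_of_mem_Eset {d : ℕ} {x : Fin d → ZMod 2} (hx : x ∈ Eset d) {i j k : Fin d}
    (hij : i ≠ j) (heq : x i = x j) (hk : x k = 0) : x i = 0 := by
  rcases hx with rfl | ⟨q, rfl⟩
  · exact absurd hk one_ne_zero
  · simp only [Pi.single_apply] at heq ⊢
    grind

theorem ne_zero_of_mem_Eset {d : ℕ} [NeZero d] {x : Fin d → ZMod 2} (hx : x ∈ Eset d) :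
    x ≠ 0 := by
  rcases hx with rfl | ⟨q, rfl⟩
  · exact one_ne_zero
  · simp

theorem ne_of_mem_Eset {g n : ℕ} {y : ℕ → ZMod 2}
    (hE : (fun k : Fin (2 * g) ↦ y ((k + 1) / 2) - y 0) ∈ Eset (2 * g)) (hn : n < g) :
    y n ≠ y g := by
  have eq_head (m : ℕ) (hm : m < g) : y m = y 0 := by
    rcases m with _ | m
    · rfl
    have hl : (2 * m + 1 + 1) / 2 = m + 1 := by omega
    have hr : (2 * m + 2 + 1) / 2 = m + 1 := by omega
    have hx := eq_zero_of_mem_Eset hE (i := ⟨2 * m + 1, by omega⟩) (j := ⟨2 * m + 2, by omega⟩)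
      (k := ⟨0, by omega⟩) (by simp) (by simp only [hl, hr]) (by simp)
    simpa only [hl, sub_eq_zero] using hx
  intro hng
  have : NeZero (2 * g) := ⟨by omega⟩
  refine ne_zero_of_mem_Eset hE (funext fun k ↦ sub_eq_zero.2 ?_)
  obtain hk | hk := (show (k + 1 : ℕ) / 2 ≤ g by omega).lt_or_eq
  · exact eq_head _ hk
  · rw [hk, ← hng, eq_head n hn]

theorem relativePositions_doubled_zero {d : ℕ} (as : List ℤ) (k : Fin d) :
    relativePositions d (doubled 0 as) k = as.getD ((k + 1) / 2) 0 - as.getD 0 0 := by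
  simp only [relativePositions, getD_doubled, Nat.zero_div]

theorem odd_of_relativePositions_mem_Eset {g : ℕ} {as : List ℤ} (hlen : as.length = g)
    (hE : (fun k ↦ ((relativePositions (2 * g) (doubled 0 as) k : ℤ) : ZMod 2)) ∈ Eset (2 * g)) :
    ∀ x ∈ as, Odd x := by
  simp only [relativePositions_doubled_zero, Int.cast_sub] at hE
  intro x hx
  obtain ⟨n, hn, rfl⟩ := List.mem_iff_getElem.1 hx
  rw [← Int.not_even_iff_odd, ← ZMod.intCast_eq_zero_iff_even]
  have hne := ne_of_mem_Eset (y := fun n ↦ (as.getD n 0 : ZMod 2)) hE (hlen ▸ hn)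
  simpa [hn, ← hlen] using hne

theorem oddPrimitive_of_relativePositions {g : ℕ} {as : List ℤ} (hlen : as.length = g)
    (hgcd : Finset.univ.gcd (relativePositions (2 * g) (doubled 0 as)) = 1)
    (hE : (fun k ↦ ((relativePositions (2 * g) (doubled 0 as) k : ℤ) : ZMod 2)) ∈ Eset (2 * g)) :
    OddPrimitive as where
  odd := odd_of_relativePositions_mem_Eset hlen hE
  isUnit_of_dvd k hk := by
    have hgetD (n : ℕ) : k ∣ as.getD n 0 := by
      rw [List.getD_eq_getElem?_getD]
      rcases h : as[n]? with _ | x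
      · simp
      · exact hk x (List.mem_of_getElem? h)
    refine gcd_eq_one_iff_isUnit_of_dvd.1 hgcd k fun i ↦ ?_
    rw [relativePositions_doubled_zero]
    exact dvd_sub (hgetD _) (hgetD _)

theorem sameOrbit_normalForm {g : ℕ} {v : Fin (2 * g) → ℤ} (hgcd : Finset.univ.gcd v = 1)
    (hE : (fun i ↦ (v i : ZMod 2)) ∈ Eset (2 * g)) :
    SameOrbit v (relativePositions (2 * g) (doubled 0 (List.replicate g 1))) := by
  obtain ⟨as, hlen, hv⟩ := exists_sameOrbit_doubled_zero v
  have has : OddPrimitive as :=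
    oddPrimitive_of_relativePositions hlen (hv.gcd_eq ▸ hgcd) (hv.mem_Eset_iff.1 hE)
  refine hv.trans ?_
  simpa only [hlen] using has.hurwitzEquiv_doubled.sameOrbit (by rw [length_doubled, hlen])

/-- For `d` even, the orbit of `e_p` under `G_d` is the set of primitive vectors of
`ℤ^{A_d}` whose reduction mod 2 lies in `E = {ē*} ∪ {ē_q}`. -/
theorem orbit_even (d : ℕ) (hd : 2 ≤ d) (he : Even d) (p : Fin d) :
    {v : Fin d → ℤ | ∃ B ∈ Gd d,
        (B : Matrix (Fin d) (Fin d) ℤ).mulVec (Pi.single p 1) = v} =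
      {v : Fin d → ℤ | Finset.univ.gcd v = 1 ∧ (fun i => (v i : ZMod 2)) ∈ Eset d} := by
  obtain ⟨g, rfl⟩ := even_iff_exists_two_mul.1 he
  have gcd_single : Finset.univ.gcd (Pi.single p 1 : Fin (2 * g) → ℤ) = 1 :=
    gcd_eq_one_iff_isUnit_of_dvd.2 fun k hk ↦ isUnit_of_dvd_one (by simpa using hk p)
  have single_mem : (fun i ↦ ((Pi.single p 1 : Fin (2 * g) → ℤ) i : ZMod 2)) ∈ Eset (2 * g) :=
    Or.inr ⟨p, by ext i; simp [Pi.single_apply]⟩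
  ext v
  constructor
  · intro (hv : SameOrbit _ v)
    exact ⟨hv.gcd_eq ▸ gcd_single, hv.mem_Eset_iff.1 single_mem⟩
  · rintro ⟨hgcd, hE⟩
    exact (sameOrbit_normalForm gcd_single single_mem).trans (sameOrbit_normalForm hgcd hE).symm
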